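/- Let ⟨λϱ.φ⟩(t)(ϱ₁,…,ϱₙ) be a modal query and suppose (inductive hypothesis) that for every state Δ and assignment v': M,Δ ⊩_{v'} φ(ϱ,ϱ₁,…,ϱₙ) iff ⟨v'(ϱ),v'(ϱ₁),…,v'(ϱₙ), id_Δ⟩ ∈ FT(φ(ϱ,ϱ₁,…,ϱₙ))(I_M). Then for every state Γ and assignment v: M,Γ ⊩_v ⟨λϱ.φ⟩(t)(ϱ₁,…,ϱₙ) iff ⟨v(ϱ₁),…,v(ϱₙ), id_Γ⟩ ∈ π_{2,…,n+2} σ_{1=n+3 ∧ n+2=n+4}(FT(φ(ϱ,ϱ₁,…,ϱₙ)) × π_{TT(t),1} Sta)(I_M). -/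

import Mathlib

namespace KripkeDB

/-- Variable kinds: object variables and concept variables. -/
inductive VKind : Type
  | obj : VKind
  | con : VKind

/-- A first-order modal model: an augmented frame `⟨G, {R_π}, D_o, D_c⟩` together with an
interpretation `I`.  `State` is the nonempty set of states, `acc r` is the accessibility
relation `R_r` for each relation symbol `r : RelSym`, `Obj` is the nonempty object domain
`D_o`, and the `m` individual concepts (functions from states to objects, `m = |D_c|`)
are indexed by `Fin m` via the bijection `𝔠` (0-based: the concept indexed by `i` has
`𝔠`-value `i+1`).  The concept indexed by `0` is the distinguished concept `id`
(so `𝔠(id) = 1`), whose value uniquely identifies each state.  By the unique names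
assumption, constants are identified with the objects/concepts they denote. -/
structure Model where
  State : Type
  state_ne : Nonempty State
  Obj : Type
  obj_ne : Nonempty Obj
  RelSym : Type
  acc : RelSym → State → State → Prop
  m : ℕ
  m_pos : 0 < m
  concept : Fin m → State → Obj
  id_inj : ∀ Γ Δ : State, concept ⟨0, m_pos⟩ Γ = concept ⟨0, m_pos⟩ Δ → Γ = Δ

/-- Database values: the domain **dom** = D_o ∪ D_c ∪ Π consists of objects,
concept names and accessibility-relation names. -/
abbrev V (M : Model) : Type := M.Obj ⊕ (Fin M.m ⊕ M.RelSym)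

/-- The id-value of a state: `(v*I)(↓id, Γ)`. -/
def idval (M : Model) (Γ : M.State) : M.Obj := M.concept ⟨0, M.m_pos⟩ Γ

/-- A relation instance: a set of tuples over the database domain. -/
abbrev Inst (M : Model) : Type := Set (List (V M))

noncomputable def deflt (M : Model) : V M := Sum.inl (Classical.choice M.obj_ne)

/-- 1-based attribute access `t(j)`. -/
noncomputable def att (M : Model) (t : List (V M)) (j : ℕ) : V M := t.getD (j - 1) (deflt M)

/-- Projection `π_{j₁,…,jₚ}`. -/
noncomputable def proj (M : Model) (js : List ℕ) (I : Inst M) : Inst M :=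
  { u | ∃ t ∈ I, u = js.map (att M t) }

/-- Selection `σ_{j=k}` (attribute `j` equals attribute `k`). -/
noncomputable def selEq (M : Model) (j k : ℕ) (I : Inst M) : Inst M :=
  { t | t ∈ I ∧ att M t j = att M t k }

/-- Selection `σ_{j=c}` (attribute `j` equals the constant `c`). -/
noncomputable def selC (M : Model) (j : ℕ) (c : V M) (I : Inst M) : Inst M :=
  { t | t ∈ I ∧ att M t j = c }

/-- Cross product `I × J`. -/
def cprod (M : Model) (I J : Inst M) : Inst M :=
  { l | ∃ t ∈ I, ∃ u ∈ J, l = t ++ u }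

/-- The `Sta`-tuple of a state `Γ`: its `i`-th entry is the value at `Γ` of the concept
with `𝔠`-value `i`. -/
def staTuple (M : Model) (Γ : M.State) : List (V M) :=
  List.ofFn (fun i : Fin M.m => Sum.inl (M.concept i Γ))

/-- The instance of the relation `Sta` in the database instance `I_M` associated with `M`. -/
def Sta (M : Model) : Inst M := { l | ∃ Γ : M.State, l = staTuple M Γ }

/-- The instance of the unary relation `Obj` (instance `D_o`) in `I_M`. -/
def ObjI (M : Model) : Inst M := { l | ∃ o : M.Obj, l = [Sum.inl o] }

/-- The instance of the unary relation `Con` (instance `D_c`) in `I_M`. -/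
def ConI (M : Model) : Inst M := { l | ∃ c : Fin M.m, l = [Sum.inr (Sum.inl c)] }

/-- The instance of the ternary relation `Rel` in `I_M`: it contains `⟨a,b,π⟩` iff
`R_π(Γ,Δ)` where `a,b` are the id-values of `Γ,Δ`. -/
def RelI (M : Model) : Inst M :=
  { l | ∃ (r : M.RelSym) (Γ Δ : M.State), M.acc r Γ Δ ∧
      l = [Sum.inl (idval M Γ), Sum.inl (idval M Δ), Sum.inr (Sum.inr r)] }

/-- Membership of a database value in the domain of a variable kind
(`D_o` for object variables, `D_c` for concept variables). -/
def kindOk (M : Model) : VKind → V M → Prop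
  | VKind.obj, x => ∃ o : M.Obj, x = Sum.inl o
  | VKind.con, x => ∃ c : Fin M.m, x = Sum.inr (Sum.inl c)

/-- `VT(ϱ₁,…,ϱₙ)`: the cross product `D₁ × … × Dₙ` of the domain relations, where `Dᵢ`
is `Con` for a concept variable and `Obj` for an object variable
(for the empty list this is `{⟨⟩}`). -/
def VTl (M : Model) (ks : List VKind) : Inst M :=
  { l | List.Forall₂ (kindOk M) ks l }

/-- Object terms: object constants (identified with objects via unique names),
object variables (de Bruijn index `k` denotes the variable `ϱ_{k+1}`), and
relativized concept terms `↓c` for a concept constant `c`. -/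
inductive OTm (M : Model) : Type
  | const : M.Obj → OTm M
  | var : ℕ → OTm M
  | down : Fin M.m → OTm M

/-- Term evaluation `(v*I)(·, Γ)`. -/
def teval (M : Model) (v : ℕ → V M) (Γ : M.State) : OTm M → V M
  | OTm.const o => Sum.inl o
  | OTm.var k => v k
  | OTm.down c => Sum.inl (M.concept c Γ)

/-- The result of the term translation `TT`: an attribute index or a constant. -/
inductive TTRes (M : Model) : Type
  | idx : ℕ → TTRes M
  | con : V M → TTRes M

/-- The term translation `TT` with `n` variables in scope: `TT(c) = 'c'` for an object
constant, `TT(ϱ_k) = k`, and `TT(↓t) = n + 𝔠(t)` for a relativized term. -/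
def TT (M : Model) (n : ℕ) : OTm M → TTRes M
  | OTm.const o => TTRes.con (Sum.inl o)
  | OTm.var k => TTRes.idx (k + 1)
  | OTm.down c => TTRes.idx (n + (c.val + 1))

/-- The value in tuple `t` designated by a `TT`-result. -/
noncomputable def ttval (M : Model) (t : List (V M)) : TTRes M → V M
  | TTRes.idx j => att M t j
  | TTRes.con c => c

/-- Generalized selection `σ_{a=b}` where each side is an attribute index or a constant. -/
noncomputable def selT (M : Model) (a b : TTRes M) (I : Inst M) : Inst M :=
  { t | t ∈ I ∧ ttval M t a = ttval M t b }

/-- Generalized selection `σ_{a≠b}`. -/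
noncomputable def selTne (M : Model) (a b : TTRes M) (I : Inst M) : Inst M :=
  { t | t ∈ I ∧ ttval M t a ≠ ttval M t b }

/-- The set of (indices of) variables occurring in a term. -/
def tvars (M : Model) : OTm M → Set ℕ
  | OTm.var k => {k}
  | _ => ∅

/-- Formulas of the modal language.  Binders (`ex`, `all`, `lam`) bind the de Bruijn
variable `0`; in `⟨λϱ.φ⟩(↓c)` the abstracted variable is an object variable and the
argument term is the relativized concept term `↓c`. -/
inductive Fma (M : Model) : Type
  | eq : OTm M → OTm M → Fma M
  | ne : OTm M → OTm M → Fma M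
  | not : Fma M → Fma M
  | and : Fma M → Fma M → Fma M
  | or : Fma M → Fma M → Fma M
  | dia : M.RelSym → Fma M → Fma M
  | box : M.RelSym → Fma M → Fma M
  | ex : VKind → Fma M → Fma M
  | all : VKind → Fma M → Fma M
  | lam : Fin M.m → Fma M → Fma M

/-- Extending an assignment with a value for the freshly bound variable. -/
def consA (M : Model) (d : V M) (v : ℕ → V M) : ℕ → V M
  | 0 => d
  | k + 1 => v k

/-- Truth in a model: `M,Γ ⊩_v φ`. -/
def Truth (M : Model) : M.State → (ℕ → V M) → Fma M → Prop
  | Γ, v, Fma.eq t₁ t₂ => teval M v Γ t₁ = teval M v Γ t₂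
  | Γ, v, Fma.ne t₁ t₂ => teval M v Γ t₁ ≠ teval M v Γ t₂
  | Γ, v, Fma.not φ => ¬ Truth M Γ v φ
  | Γ, v, Fma.and φ ψ => Truth M Γ v φ ∧ Truth M Γ v ψ
  | Γ, v, Fma.or φ ψ => Truth M Γ v φ ∨ Truth M Γ v ψ
  | Γ, v, Fma.dia r φ => ∃ Δ : M.State, M.acc r Γ Δ ∧ Truth M Δ v φ
  | Γ, v, Fma.box r φ => ∀ Δ : M.State, M.acc r Γ Δ → Truth M Δ v φ
  | Γ, v, Fma.ex k φ => ∃ d : V M, kindOk M k d ∧ Truth M Γ (consA M d v) φ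
  | Γ, v, Fma.all k φ => ∀ d : V M, kindOk M k d → Truth M Γ (consA M d v) φ
  | Γ, v, Fma.lam c φ => Truth M Γ (consA M (Sum.inl (M.concept c Γ)) v) φ

/-- The translation `FT` of modal queries into relational algebra queries, evaluated on
`I_M`.  `ks` is the list of kinds of the free variables `ϱ₁,…,ϱₙ` (so `n = ks.length`).
The box clause is `FT([π]φ) = FT(¬⟨π⟩¬φ)`, written out. -/
noncomputable def FT (M : Model) : List VKind → Fma M → Inst M
  | ks, Fma.eq t₁ t₂ =>
      proj M (List.range' 1 (ks.length + 1))
        (selT M (TT M ks.length t₁) (TT M ks.length t₂) (cprod M (VTl M ks) (Sta M)))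
  | ks, Fma.ne t₁ t₂ =>
      proj M (List.range' 1 (ks.length + 1))
        (selTne M (TT M ks.length t₁) (TT M ks.length t₂) (cprod M (VTl M ks) (Sta M)))
  | ks, Fma.not φ =>
      cprod M (VTl M ks) (proj M [1] (Sta M)) \ FT M ks φ
  | ks, Fma.and φ ψ => FT M ks φ ∩ FT M ks ψ
  | ks, Fma.or φ ψ => FT M ks φ ∪ FT M ks ψ
  | ks, Fma.dia r φ =>
      proj M (List.range' 1 ks.length ++ [ks.length + 2])
        (selC M (ks.length + 4) (Sum.inr (Sum.inr r))
          (selEq M (ks.length + 1) (ks.length + 3) (cprod M (FT M ks φ) (RelI M))))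
  | ks, Fma.box r φ =>
      cprod M (VTl M ks) (proj M [1] (Sta M)) \
        proj M (List.range' 1 ks.length ++ [ks.length + 2])
          (selC M (ks.length + 4) (Sum.inr (Sum.inr r))
            (selEq M (ks.length + 1) (ks.length + 3)
              (cprod M (cprod M (VTl M ks) (proj M [1] (Sta M)) \ FT M ks φ) (RelI M))))
  | ks, Fma.ex k φ =>
      proj M (List.range' 2 (ks.length + 1)) (FT M (k :: ks) φ)
  | ks, Fma.all k φ =>
      proj M (List.range' 2 (ks.length + 1)) (FT M (k :: ks) φ) \
        proj M (List.range' 2 (ks.length + 1))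
          (cprod M (VTl M [k]) (proj M (List.range' 2 (ks.length + 1)) (FT M (k :: ks) φ)) \
            FT M (k :: ks) φ)
  | ks, Fma.lam c φ =>
      proj M (List.range' 2 (ks.length + 1))
        (selEq M 1 (ks.length + 3)
          (selEq M (ks.length + 2) (ks.length + 4)
            (cprod M (FT M (VKind.obj :: ks) φ) (proj M [c.val + 1, 1] (Sta M)))))

/-- Well-formedness of a term in a context of variable kinds. -/
def WFt (M : Model) (ks : List VKind) : OTm M → Prop
  | OTm.const _ => True
  | OTm.var k => ks[k]? = some VKind.obj
  | OTm.down _ => True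

/-- Well-formedness of a formula in a context of variable kinds: a modal query
`φ(ϱ₁,…,ϱₙ)` is a well-formed formula whose free variables are among `ϱ₁,…,ϱₙ`. -/
def WF (M : Model) : List VKind → Fma M → Prop
  | ks, Fma.eq t₁ t₂ => WFt M ks t₁ ∧ WFt M ks t₂
  | ks, Fma.ne t₁ t₂ => WFt M ks t₁ ∧ WFt M ks t₂
  | ks, Fma.not φ => WF M ks φ
  | ks, Fma.and φ ψ => WF M ks φ ∧ WF M ks ψ
  | ks, Fma.or φ ψ => WF M ks φ ∧ WF M ks ψ
  | ks, Fma.dia _ φ => WF M ks φ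
  | ks, Fma.box _ φ => WF M ks φ
  | ks, Fma.ex k φ => WF M (k :: ks) φ
  | ks, Fma.all k φ => WF M (k :: ks) φ
  | ks, Fma.lam _ φ => WF M (VKind.obj :: ks) φ

/-- An assignment conforms to a context of kinds if it maps object variables into `D_o`
and concept variables into `D_c`. -/
def Conf (M : Model) (ks : List VKind) (v : ℕ → V M) : Prop :=
  ∀ k : Fin ks.length, kindOk M (ks.get k) (v k)

/-- All tuples of the relation instance `I` have exactly `k` attributes; the type `Inst` does
not record degrees. -/
def HasDegree {M : Model} (I : Inst M) (k : ℕ) : Prop := ∀ t ∈ I, t.length = k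

section Degree

variable {M : Model} {I J : Inst M} {k l : ℕ}

theorem HasDegree.mono (hJ : HasDegree J k) (hIJ : I ⊆ J) : HasDegree I k :=
  fun t ht => hJ t (hIJ ht)

theorem HasDegree.cprod (hI : HasDegree I k) (hJ : HasDegree J l) :
    HasDegree (cprod M I J) (k + l) := by
  rintro _ ⟨t, ht, u, hu, rfl⟩
  rw [List.length_append, hI t ht, hJ u hu]

theorem hasDegree_proj (js : List ℕ) (I : Inst M) : HasDegree (proj M js I) js.length := by
  rintro _ ⟨t, -, rfl⟩
  exact List.length_map _

theorem hasDegree_VTl (ks : List VKind) : HasDegree (VTl M ks) ks.length :=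
  fun _ ht => (List.Forall₂.length_eq ht).symm

end Degree

section Attributes

variable {M : Model}

theorem att_append_left {t : List (V M)} {j : ℕ} (u : List (V M)) (hj : j < t.length) :
    att M (t ++ u) (j + 1) = att M t (j + 1) :=
  List.getD_append t u _ j hj

theorem att_append_right (t u : List (V M)) (j : ℕ) :
    att M (t ++ u) (t.length + (j + 1)) = att M u (j + 1) := by
  have h := List.getD_append_right t u (deflt M) (t.length + j) (Nat.le_add_right _ _)
  rwa [Nat.add_sub_cancel_left] at h

theorem map_att_range' {t : List (V M)} {s k : ℕ} (h : s + k ≤ t.length) :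
    (List.range' (s + 1) k).map (att M t) = (t.drop s).take k := by
  refine List.ext_getElem (by grind) fun i hi _ => ?_
  have hik : i < k := by simpa using hi
  have hit : s + i < t.length := by omega
  have hidx : s + 1 + i - 1 = s + i := by omega
  simp [att, hidx, hit]

theorem map_att_range'_cons_append (a : V M) (w s : List (V M)) :
    (List.range' 2 w.length).map (att M (a :: w ++ s)) = w := by
  have h : 1 + w.length ≤ (a :: w ++ s).length := by grind
  simpa using map_att_range' h

theorem att_staTuple (Γ : M.State) (c : Fin M.m) :
    att M (staTuple M Γ) (c.val + 1) = Sum.inl (M.concept c Γ) := by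
  simp [att, staTuple]

theorem mem_proj_concept_id_Sta {c : Fin M.m} {u : List (V M)} :
    u ∈ proj M [c.val + 1, 1] (Sta M) ↔
      ∃ Γ : M.State, u = [Sum.inl (M.concept c Γ), Sum.inl (idval M Γ)] := by
  have hrow (Γ : M.State) : [c.val + 1, 1].map (att M (staTuple M Γ)) =
      [Sum.inl (M.concept c Γ), Sum.inl (idval M Γ)] :=
    congrArg₂ (fun a b => [a, b]) (att_staTuple Γ c) (att_staTuple Γ ⟨0, M.m_pos⟩)
  constructor
  · rintro ⟨_, ⟨Γ, rfl⟩, rfl⟩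
    exact ⟨Γ, hrow Γ⟩
  · rintro ⟨Γ, rfl⟩
    exact ⟨_, ⟨Γ, rfl⟩, (hrow Γ).symm⟩

end Attributes

section PredicateAbstraction

variable {M : Model} {n : ℕ} {I : Inst M}

theorem mem_proj_selEq_selEq_cprod_iff (hI : HasDegree I (n + 2)) (J : Inst M)
    (u : List (V M)) :
    u ∈ proj M (List.range' 2 (n + 1))
        (selEq M 1 (n + 3) (selEq M (n + 2) (n + 4) (cprod M I J))) ↔
      ∃ s ∈ J, att M s 1 :: u ∈ I ∧ att M u (n + 1) = att M s 2 := by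
  have hatt {a : V M} {w : List (V M)} (hw : w.length = n + 1) (s : List (V M)) :
      att M (a :: w ++ s) 1 = a ∧ att M (a :: w ++ s) (n + 2) = att M w (n + 1) ∧
      att M (a :: w ++ s) (n + 3) = att M s 1 ∧ att M (a :: w ++ s) (n + 4) = att M s 2 := by
    have hlen : (a :: w).length = n + 2 := by rw [List.length_cons, hw]
    refine ⟨rfl, att_append_left (t := w) s (by omega), ?_, ?_⟩
    · simpa only [hlen] using att_append_right (a :: w) s 0
    · simpa only [hlen] using att_append_right (a :: w) s 1
  constructor
  · rintro ⟨_, ⟨⟨⟨t, ht, s, hs, rfl⟩, hlast⟩, hfirst⟩, rfl⟩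
    obtain ⟨a, w, rfl⟩ := List.exists_cons_of_length_eq_add_one (hI t ht)
    have hw : w.length = n + 1 := Nat.succ_injective (hI _ ht)
    obtain ⟨h₁, h₂, h₃, h₄⟩ := hatt (a := a) hw s
    rw [h₁, h₃] at hfirst
    rw [h₂, h₄] at hlast
    rw [← hw, map_att_range'_cons_append, hw]
    exact ⟨s, hs, hfirst ▸ ht, hlast⟩
  · rintro ⟨s, hs, ht, hlast⟩
    have hu : u.length = n + 1 := Nat.succ_injective (hI _ ht)
    obtain ⟨h₁, h₂, h₃, h₄⟩ := hatt (a := att M s 1) hu s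
    refine ⟨_, ⟨⟨⟨_, ht, s, hs, rfl⟩, by rw [h₂, h₄, hlast]⟩, by rw [h₁, h₃]⟩, ?_⟩
    rw [← hu, map_att_range'_cons_append]

theorem lam_case_general (hI : HasDegree I (n + 2)) (c : Fin M.m) (Γ : M.State)
    {w : List (V M)} (hw : w.length = n) :
    Sum.inl (M.concept c Γ) :: (w ++ [Sum.inl (idval M Γ)]) ∈ I ↔
      w ++ [Sum.inl (idval M Γ)] ∈
        proj M (List.range' 2 (n + 1))
          (selEq M 1 (n + 3)
            (selEq M (n + 2) (n + 4) (cprod M I (proj M [c.val + 1, 1] (Sta M))))) := by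
  have hid : att M (w ++ [Sum.inl (idval M Γ)]) (n + 1) = Sum.inl (idval M Γ) :=
    hw ▸ att_append_right w [Sum.inl (idval M Γ)] 0
  rw [mem_proj_selEq_selEq_cprod_iff hI, hid]
  constructor
  · exact fun h => ⟨_, mem_proj_concept_id_Sta.2 ⟨Γ, rfl⟩, h, rfl⟩
  · rintro ⟨s, hs, hmem, heq⟩
    obtain ⟨Δ, rfl⟩ := mem_proj_concept_id_Sta.1 hs
    -- Since `id` separates states, the row joined with the tuple can only be that of `Γ`.
    obtain rfl : Γ = Δ := M.id_inj Γ Δ (Sum.inl.inj heq)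
    exact hmem

end PredicateAbstraction

/-- **predicate abstraction case.** Let `⟨λϱ.φ⟩(t)(ϱ₁,…,ϱₙ)` be a modal
query, where `t = ↓c` is a relativized concept term with Sta-attribute `TT(t) = 𝔠(c)`
(semantics of `φ(ϱ,ϱ₁,…,ϱₙ)` is `Tφ`, with the value of the abstracted object variable
`ϱ` as a separate argument; translation image `Fφ = FT(φ(ϱ,ϱ₁,…,ϱₙ))(I_M)`, whose
tuples carry `ϱ` at attribute 1 and the state id at attribute `n+2`, as recorded by
`hF`).  Suppose (inductive hypothesis) that for every state `Δ` and assignment `v'`: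
`M,Δ ⊩_{v'} φ(ϱ,ϱ₁,…,ϱₙ)` iff `⟨v'(ϱ),v'(ϱ₁),…,v'(ϱₙ), id_Δ⟩ ∈ Fφ`.  Then for every
state `Γ` and assignment `v`: `M,Γ ⊩_v ⟨λϱ.φ⟩(t)` (i.e. `M,Γ ⊩ φ[ϱ/(v*I)(t,Γ)]`) iff
`⟨v(ϱ₁),…,v(ϱₙ), id_Γ⟩ ∈ π_{2,…,n+2} σ_{1=n+3 ∧ n+2=n+4}(Fφ × π_{TT(t),1} Sta)(I_M)`. -/
theorem lam_case (M : Model) (n : ℕ) (ks : Fin n → VKind) (c : Fin M.m)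
    (Tφ : M.State → V M → (Fin n → V M) → Prop) (Fφ : Inst M)
    (hF : Fφ ⊆ cprod M (VTl M (VKind.obj :: List.ofFn ks)) (proj M [1] (Sta M)))
    (IH : ∀ (Δ : M.State) (d : V M) (v' : Fin n → V M),
      kindOk M VKind.obj d → (∀ j, kindOk M (ks j) (v' j)) →
      (Tφ Δ d v' ↔ (d :: (List.ofFn v' ++ [Sum.inl (idval M Δ)])) ∈ Fφ)) :
    ∀ (Γ : M.State) (v : Fin n → V M), (∀ j, kindOk M (ks j) (v j)) →
      (Tφ Γ (Sum.inl (M.concept c Γ)) v ↔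
        (List.ofFn v ++ [Sum.inl (idval M Γ)]) ∈
          proj M (List.range' 2 (n + 1))
            (selEq M 1 (n + 3)
              (selEq M (n + 2) (n + 4)
                (cprod M Fφ (proj M [c.val + 1, 1] (Sta M)))))) := by
  intro Γ v hv
  have hdeg : HasDegree Fφ (n + 2) := by
    simpa using ((hasDegree_VTl _).cprod (hasDegree_proj _ _)).mono hF
  rw [IH Γ _ v ⟨_, rfl⟩ hv, lam_case_general hdeg c Γ List.length_ofFn]

end KripkeDB
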